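/- Let θ be a cylindric diagram in C_ω. Define the ordinary order ≤^or by α ≤^or β iff β − α ∈ Q₊, and define the heap order ≤^hp on R(w_θ) as the reflexive-transitive closure of the relation: α ≤^hp β whenever α ≤^or β and ⟨α, β^∨⟩ ≠ 0. Then the map hk : (θ, ≤) → (R(w_θ), ≤^hp) is an order isomorphism; equivalently, the orders ≤^hp and ⊴ on R(w_θ) coincide. -/

import Mathlib

/-!
Lift `θ` to a periodic order filter of `ℤ²` and describe it by its boundary functions:
`(a, b)` is a cell iff `b ≤ f a` iff `a ≤ g b` (`exists_boundary`). Attach to row `a` the label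
`q = f a - a + 1` and to column `b` the label `p = b - g b`. Row labels and column labels are each
stable under translation by `κ`, and they are disjoint modulo `κ` (`label_not_dvd`).

* The hook of `(a, b)` is the sum of the `α_j` over the integer segment `[p, q)` (`hk_eq_seg`), and
  `x ≤ y` holds iff, up to a shift by a multiple of `κ`, the segment of `x` lies in that of `y`.
* `Π_θ` consists of the segments between consecutive row labels and between consecutive column
  labels (`gap_of_mem_PiTheta`, `row_gap_mem_PiTheta`, `col_gap_mem_PiTheta`).
* The multiplicity of `α_j` in `[p, q)` is `⌊(j - p)/κ⌋ - ⌊(j - q)/κ⌋` (`seg_fst`), and the pairing of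
  two hooks `[p, q)`, `[p', q')` is `[p ≡ p'] + [q ≡ q']` (`pairCo_seg_seg` and disjointness).

Adjacent cells of `θ` share an endpoint of their segments, and the difference of their hooks is a
gap; hence `x ≤ y` implies both `hk x ≤^hp hk y` and `hk x ⊴ hk y`.

Conversely, if the pairing is nonzero then two endpoints agree modulo `κ`, and nonnegativity of
the difference of the hooks, evaluated at a well-chosen `j`, compares the other two endpoints
(`cle_of_hpRel`). If `hk x ⊴ hk y`, write the difference as `u + w` with `u, w ≥ 0` on `ℤ`, where `u`
jumps only at row labels and `w` only at column labels. Then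
`u(j) - (⌊(j - q)/κ⌋ - ⌊(j - q')/κ⌋) = (⌊(j - p')/κ⌋ - ⌊(j - p)/κ⌋) - w(j)`
can jump neither outside the row labels nor outside the column labels, so it is a constant `s`;
nonnegativity of `u` at `q'` and of `w` at `p` gives `q ≤ q' + sκ` and `p' + sκ ≤ p`
(`cle_of_trile`).
-/

namespace CylPaper

/-! ## The cylinder and its order -/

abbrev Z2 : Type := ℤ × ℤ

/-- The partial order on ℤ²: (a,b) ≤ (c,d) iff a ≥ c and b ≥ d. -/
def le2 (x y : Z2) : Prop := y.1 ≤ x.1 ∧ y.2 ≤ x.2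

/-- The period ω = (m, -ℓ). -/
def om (m l : ℕ) : Z2 := ((m : ℤ), -(l : ℤ))

/-- The cylinder C_ω = ℤ²/ℤω. -/
abbrev Cyl (m l : ℕ) : Type := Z2 ⧸ AddSubgroup.zmultiples (om m l)

/-- The natural projection π : ℤ² → C_ω. -/
def pr (m l : ℕ) : Z2 →+ Cyl m l := QuotientAddGroup.mk' _

/-- The induced order relation on the cylinder: x ≤ y iff there are lifts with x̃ ≤ ỹ. -/
def cle (m l : ℕ) (x y : Cyl m l) : Prop :=
  ∃ a b : Z2, pr m l a = x ∧ pr m l b = y ∧ le2 a b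

/-- A cylindric diagram: a non-trivial order filter of C_ω. -/
def IsCylindric (m l : ℕ) (θ : Set (Cyl m l)) : Prop :=
  θ.Nonempty ∧ θ ≠ Set.univ ∧ ∀ x ∈ θ, ∀ y, cle m l x y → y ∈ θ

/-- A periodic diagram of period ω: a non-trivial order filter of ℤ² with Θ + ω = Θ. -/
def IsPeriodic (m l : ℕ) (Θ : Set Z2) : Prop :=
  Θ.Nonempty ∧ Θ ≠ Set.univ ∧ (∀ x ∈ Θ, ∀ y, le2 x y → y ∈ Θ) ∧
    (fun p => p + om m l) '' Θ = Θ

/-- A proper order ideal ξ of the sub-poset θ of C_ω. -/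
def IsProperIdealOf (m l : ℕ) (θ ξ : Set (Cyl m l)) : Prop :=
  ξ ⊆ θ ∧ ξ ≠ θ ∧ ∀ x ∈ ξ, ∀ y ∈ θ, cle m l y x → y ∈ ξ

/-- A proper order ideal of the whole cylinder C_ω. -/
def IsProperIdealC (m l : ℕ) (J : Set (Cyl m l)) : Prop :=
  J ≠ Set.univ ∧ ∀ x ∈ J, ∀ y, cle m l y x → y ∈ J

/-- A proper order filter of the whole cylinder C_ω. -/
def IsProperFilterC (m l : ℕ) (J : Set (Cyl m l)) : Prop :=
  J ≠ Set.univ ∧ ∀ x ∈ J, ∀ y, cle m l x y → y ∈ J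

/-! ## The content map -/

/-- The content on ℤ²: (a,b) ↦ b - a mod κ (κ = m + ℓ). -/
def conHom (m l : ℕ) : Z2 →+ ZMod (m + l) where
  toFun p := ((p.2 - p.1 : ℤ) : ZMod (m + l))
  map_zero' := by simp
  map_add' a b := by
    simp only [Prod.fst_add, Prod.snd_add]
    push_cast
    ring

lemma conHom_om (m l : ℕ) : conHom m l (om m l) = 0 := by
  have h : ((m + l : ℕ) : ZMod (m + l)) = 0 := ZMod.natCast_self _
  show ((((om m l).2 - (om m l).1 : ℤ)) : ZMod (m + l)) = 0
  simp only [om]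
  push_cast at h ⊢
  linear_combination -h

/-- The content map con : C_ω → ℤ/κℤ. -/
def con (m l : ℕ) : Cyl m l →+ ZMod (m + l) :=
  QuotientAddGroup.lift _ (conHom m l) (by
    intro x hx
    obtain ⟨k, rfl⟩ := AddSubgroup.mem_zmultiples_iff.mp hx
    simp only [AddMonoidHom.mem_ker, map_zsmul, conHom_om, smul_zero])

/-! ## The affine root system of type A_{κ-1}^{(1)} -/

/-- h*, with coordinates in the basis {α_i (i ∈ ℤ/κℤ), Λ₀}:
`(c, t)` stands for `Σ_i c_i α_i + t Λ₀`. -/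
abbrev Hw (κ : ℕ) : Type := (ZMod κ → ℚ) × ℚ

/-- The affine Cartan matrix of type A_{κ-1}^{(1)} (valid for κ ≥ 2). -/
def cartan (κ : ℕ) (i j : ZMod κ) : ℚ :=
  (if i = j then 2 else 0) + (if i - j = 1 then -1 else 0) + (if i - j = -1 then -1 else 0)

/-- The simple root α_i. -/
def alphaR (κ : ℕ) (i : ZMod κ) : Hw κ := (Pi.single i 1, 0)

/-- The null root δ = Σ_i α_i. -/
def deltaR (κ : ℕ) : Hw κ := (fun _ => 1, 0)

/-- The pairing ⟨ζ, α_i^∨⟩. -/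
noncomputable def pairSimple (κ : ℕ) (ζ : Hw κ) (i : ZMod κ) : ℚ :=
  (∑ᶠ j, ζ.1 j * cartan κ i j) + ζ.2 * (if i = 0 then 1 else 0)

/-- The pairing ⟨ζ, β^∨⟩ where β = Σ_i k_i α_i lies in the root lattice,
so β^∨ = Σ_i k_i α_i^∨. -/
noncomputable def pairCo (κ : ℕ) (ζ β : Hw κ) : ℚ := ∑ᶠ i, β.1 i * pairSimple κ ζ i

/-- The simple reflection s_i : ζ ↦ ζ - ⟨ζ, α_i^∨⟩ α_i, as a map on h*. -/
noncomputable def sFun (κ : ℕ) (i : ZMod κ) (ζ : Hw κ) : Hw κ :=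
  ζ - pairSimple κ ζ i • alphaR κ i

/-- The element s_{i₁} s_{i₂} ⋯ s_{i_r} of the affine Weyl group
given by a word [i₁, i₂, …, i_r]. -/
noncomputable def wordProd (κ : ℕ) (L : List (ZMod κ)) : Hw κ → Hw κ :=
  (L.map (sFun κ)).foldr (· ∘ ·) id

/-- Membership in the affine Weyl group W (generated by the s_i). -/
def Wmem (κ : ℕ) (w : Hw κ → Hw κ) : Prop := ∃ L : List (ZMod κ), wordProd κ L = w

/-- The Coxeter length: the least r such that w is a product of r simple reflections. -/
noncomputable def len (κ : ℕ) (w : Hw κ → Hw κ) : ℕ :=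
  sInf {r : ℕ | ∃ L : List (ZMod κ), L.length = r ∧ wordProd κ L = w}

/-- Q₊ = Σ_i ℤ≥0 α_i. -/
def QPos (κ : ℕ) : Set (Hw κ) := {x | x.2 = 0 ∧ ∀ i, ∃ n : ℕ, x.1 i = (n : ℚ)}

/-- The set R = WΠ of real roots. -/
def Rset (κ : ℕ) : Set (Hw κ) :=
  {β | ∃ (L : List (ZMod κ)) (i : ZMod κ), β = wordProd κ L (alphaR κ i)}

/-- Positive real roots R₊ = R ∩ Q₊. -/
def Rpos (κ : ℕ) : Set (Hw κ) := Rset κ ∩ QPos κ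

/-- Negative real roots R₋ = -R₊. -/
def Rneg (κ : ℕ) : Set (Hw κ) := {β | -β ∈ Rpos κ}

/-- The inversion set R(w) = R₊ ∩ w R₋. -/
def invSet (κ : ℕ) (w : Hw κ → Hw κ) : Set (Hw κ) := Rpos κ ∩ (w '' Rneg κ)

/-- The weak right Bruhat order on W. -/
def wble (κ : ℕ) (v w : Hw κ → Hw κ) : Prop :=
  Relation.ReflTransGen
    (fun u u' => ∃ i : ZMod κ, u' = u ∘ sFun κ i ∧ len κ u' = len κ u + 1) v w

/-- The weak Bruhat interval [e, w]. -/
def bint (κ : ℕ) (w : Hw κ → Hw κ) : Set (Hw κ → Hw κ) :=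
  {x | wble κ id x ∧ wble κ x w}

/-- A single commutation move on words: swap adjacent letters i, j with i - j ≠ 0, ±1. -/
def CommMove (κ : ℕ) (L1 L2 : List (ZMod κ)) : Prop :=
  ∃ (u v : List (ZMod κ)) (i j : ZMod κ),
    i - j ≠ 0 ∧ i - j ≠ 1 ∧ i - j ≠ -1 ∧
    L1 = u ++ i :: j :: v ∧ L2 = u ++ j :: i :: v

/-- A word is reduced if its length equals the Coxeter length of its product. -/
def IsReducedWord (κ : ℕ) (L : List (ZMod κ)) : Prop :=
  len κ (wordProd κ L) = L.length

/-- Fully commutative: any reduced word for w can be obtained from any other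
using only commutation moves. -/
def FullyComm (κ : ℕ) (w : Hw κ → Hw κ) : Prop :=
  ∀ L1 L2 : List (ZMod κ),
    IsReducedWord κ L1 → wordProd κ L1 = w →
    IsReducedWord κ L2 → wordProd κ L2 = w →
    Relation.ReflTransGen (CommMove κ) L1 L2

/-! ## Hooks, bottom set and weights attached to a cylindric diagram -/

/-- α(x) = α_{con(x)}. -/
def alC (m l : ℕ) (x : Cyl m l) : Hw (m + l) := alphaR (m + l) (con m l x)

/-- arm(x) = {x + π(0,k) : k ≥ 1} ∩ θ. -/
def armSet (m l : ℕ) (θ : Set (Cyl m l)) (x : Cyl m l) : Set (Cyl m l) :=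
  {y | y ∈ θ ∧ ∃ k : ℕ, 1 ≤ k ∧ y = x + pr m l (0, (k : ℤ))}

/-- leg(x) = {x + π(k,0) : k ≥ 1} ∩ θ. -/
def legSet (m l : ℕ) (θ : Set (Cyl m l)) (x : Cyl m l) : Set (Cyl m l) :=
  {y | y ∈ θ ∧ ∃ k : ℕ, 1 ≤ k ∧ y = x + pr m l ((k : ℤ), 0)}

/-- The colored hook length hk(x) = α(x) + Σ_{y∈arm(x)} α(y) + Σ_{y∈leg(x)} α(y). -/
noncomputable def hk (m l : ℕ) (θ : Set (Cyl m l)) (x : Cyl m l) : Hw (m + l) :=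
  alC m l x + (∑ᶠ y ∈ armSet m l θ x, alC m l y) + (∑ᶠ y ∈ legSet m l θ x, alC m l y)

/-- x is the minimum cell b_i of content i in θ. -/
def IsBottomCell (m l : ℕ) (θ : Set (Cyl m l)) (i : ZMod (m + l)) (x : Cyl m l) : Prop :=
  x ∈ θ ∧ con m l x = i ∧ ∀ y ∈ θ, con m l y = i → cle m l x y

/-- The bottom set Γ = {b_i : i ∈ ℤ/κℤ}. -/
def btm (m l : ℕ) (θ : Set (Cyl m l)) : Set (Cyl m l) :=
  {x | ∃ i, IsBottomCell m l θ i x}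

/-- The maximal elements Γ_max of the bottom set. -/
def btmMax (m l : ℕ) (θ : Set (Cyl m l)) : Set (Cyl m l) :=
  {x | x ∈ btm m l θ ∧ ∀ y ∈ btm m l θ, cle m l x y → y = x}

/-- The minimal elements Γ_min of the bottom set. -/
def btmMin (m l : ℕ) (θ : Set (Cyl m l)) : Set (Cyl m l) :=
  {x | x ∈ btm m l θ ∧ ∀ y ∈ btm m l θ, cle m l y x → y = x}

open Classical in
/-- The coefficient a_i of Λ_i in the predominant weight P_θ:
1 if b_i ∈ Γ_max, -1 if b_i ∈ Γ_min, 0 otherwise. -/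
noncomputable def aC (m l : ℕ) (θ : Set (Cyl m l)) (i : ZMod (m + l)) : ℚ :=
  if ∃ x, IsBottomCell m l θ i x ∧ x ∈ btmMax m l θ then 1
  else if ∃ x, IsBottomCell m l θ i x ∧ x ∈ btmMin m l θ then -1 else 0

/-- The pairing ⟨P_θ, β^∨⟩ = Σ_i a_i k_i for β = Σ_i k_i α_i,
where P_θ = Σ_i a_i Λ_i (since ⟨Λ_i, α_j^∨⟩ = δ_{ij} and ⟨Λ_i, d⟩ = 0). -/
noncomputable def pairP (m l : ℕ) (θ : Set (Cyl m l)) (β : Hw (m + l)) : ℚ :=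
  ∑ᶠ i, aC m l θ i * β.1 i

/-- D(P_θ) = {α ∈ R₊ : ⟨P_θ, α^∨⟩ = -1}. -/
def DSet (m l : ℕ) (θ : Set (Cyl m l)) : Set (Hw (m + l)) :=
  {β | β ∈ Rpos (m + l) ∧ pairP m l θ β = -1}

/-- The "inversion set" R(w_θ) = {hk(x) : x ∈ θ}. -/
def RwTheta (m l : ℕ) (θ : Set (Cyl m l)) : Set (Hw (m + l)) := hk m l θ '' θ

/-- The set Π_θ = Π_θ^0 ∪ Π_θ^arm ∪ Π_θ^leg. -/
def PiTheta (m l : ℕ) (θ : Set (Cyl m l)) : Set (Hw (m + l)) :=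
  {v | ∃ x, x ∈ btm m l θ ∧ x ∉ btmMax m l θ ∧ x ∉ btmMin m l θ ∧ v = alC m l x} ∪
  {v | ∃ x, x ∈ btmMax m l θ ∧ v = alC m l x + ∑ᶠ y ∈ armSet m l θ x, alC m l y} ∪
  {v | ∃ x, x ∈ btmMax m l θ ∧ v = alC m l x + ∑ᶠ y ∈ legSet m l θ x, alC m l y}

/-- The modified order ⊴ on R(w_θ): α ⊴ β iff β - α ∈ Σ_{γ∈Π_θ} ℤ≥0 γ. -/
def trile (m l : ℕ) (θ : Set (Cyl m l)) (α β : Hw (m + l)) : Prop :=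
  β - α ∈ AddSubmonoid.closure (PiTheta m l θ)

/-! ## Standard tableaux (encoded by the inverse enumeration e = T⁻¹ : ℤ≥1 → θ) -/

/-- A standard tableau on θ, given by the enumeration e = T⁻¹ : {1,2,…} → θ.
This is precisely the data of an order-preserving bijection T : θ → ℤ≥1. -/
def IsTableau (m l : ℕ) (θ : Set (Cyl m l)) (e : ℕ → Cyl m l) : Prop :=
  Set.InjOn e {a : ℕ | 1 ≤ a} ∧ e '' {a : ℕ | 1 ≤ a} = θ ∧
  ∀ a b : ℕ, 1 ≤ a → 1 ≤ b → cle m l (e a) (e b) → e a ≠ e b → a < b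

/-- A standard tableau on a finite (skew) diagram ξ with |ξ| = n, encoded by
the enumeration e = S⁻¹ : {1,…,n} → ξ. -/
def IsTableauOn (m l : ℕ) (ξ : Set (Cyl m l)) (n : ℕ) (e : ℕ → Cyl m l) : Prop :=
  Set.InjOn e (Set.Icc 1 n) ∧ e '' Set.Icc 1 n = ξ ∧
  ∀ a b : ℕ, a ∈ Set.Icc 1 n → b ∈ Set.Icc 1 n → cle m l (e a) (e b) → e a ≠ e b → a < b

/-- The word (con(e 1), con(e 2), …, con(e n)). -/
def tabWord (m l : ℕ) (e : ℕ → Cyl m l) (n : ℕ) : List (ZMod (m + l)) :=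
  (List.range n).map (fun k => con m l (e (k + 1)))

/-- The semi-infinite Bruhat interval [e, w_{θ,T}) = ⋃_{n≥1} [e, w_{θ,T}[n]]. -/
def semiInt (m l : ℕ) (e : ℕ → Cyl m l) : Set (Hw (m + l) → Hw (m + l)) :=
  ⋃ n ∈ {n : ℕ | 1 ≤ n}, bint (m + l) (wordProd (m + l) (tabWord m l e n))

/-- w is P_θ-pluscule: ⟨P_θ, α^∨⟩ = -1 for every α ∈ R(w). -/
def Pluscule (m l : ℕ) (θ : Set (Cyl m l)) (w : Hw (m + l) → Hw (m + l)) : Prop :=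
  ∀ β ∈ invSet (m + l) w, pairP m l θ β = -1

/-- The generating relation of the heap order ⪯_T on ℤ≥1. -/
def heapRel (m l : ℕ) (e : ℕ → Cyl m l) (a b : ℕ) : Prop :=
  1 ≤ a ∧ a ≤ b ∧
    (con m l (e a) = con m l (e b) ∨
      sFun (m + l) (con m l (e a)) ∘ sFun (m + l) (con m l (e b)) ≠
        sFun (m + l) (con m l (e b)) ∘ sFun (m + l) (con m l (e a)))

/-- The generating relation of the heap order ≤^hp on R(w_θ):
α ≤ β whenever β - α ∈ Q₊ (the ordinary order) and ⟨α, β^∨⟩ ≠ 0. -/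
def hpRel (m l : ℕ) (θ : Set (Cyl m l)) (α β : Hw (m + l)) : Prop :=
  α ∈ RwTheta m l θ ∧ β ∈ RwTheta m l θ ∧ β - α ∈ QPos (m + l) ∧
    pairCo (m + l) α β ≠ 0

/-- v is the Weyl group element w_ξ of a proper order ideal ξ of θ. -/
def IsIdealWord (m l : ℕ) (θ ξ : Set (Cyl m l)) (v : Hw (m + l) → Hw (m + l)) : Prop :=
  IsProperIdealOf m l θ ξ ∧
    ∃ n e, IsTableauOn m l ξ n e ∧ v = wordProd (m + l) (tabWord m l e n)

/-- A proper order ideal of the poset (R(w_θ), ⊴). -/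
def IsProperIdealOfRw (m l : ℕ) (θ : Set (Cyl m l)) (J : Set (Hw (m + l))) : Prop :=
  J ⊆ RwTheta m l θ ∧ J ≠ RwTheta m l θ ∧
    ∀ β ∈ J, ∀ α ∈ RwTheta m l θ, trile m l θ α β → α ∈ J


/-! ### Segments of simple roots -/

/-- The sum `Σ_{p ≤ j < q} α_{j mod κ}` attached to the integer interval `[p, q)`. -/
noncomputable def seg (κ : ℕ) (p q : ℤ) : Hw κ := ∑ j ∈ Finset.Ico p q, alphaR κ (j : ZMod κ)

lemma seg_self (κ : ℕ) (p : ℤ) : seg κ p p = 0 := by simp [seg]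

lemma seg_succ (κ : ℕ) {p q : ℤ} (h : p ≤ q) :
    seg κ p (q + 1) = seg κ p q + alphaR κ (q : ZMod κ) := by
  have : Finset.Ico p (q + 1) = insert q (Finset.Ico p q) := by
    ext j; simp only [Finset.mem_Ico, Finset.mem_insert]; omega
  rw [seg, this, Finset.sum_insert (by simp), add_comm, seg]

lemma seg_add (κ : ℕ) {p q r : ℤ} (h : p ≤ q) (h' : q ≤ r) :
    seg κ p q + seg κ q r = seg κ p r := by
  induction r, h' using Int.leInduction with
  | base => simp [seg_self]
  | succ r hr ih => rw [seg_succ κ hr, seg_succ κ (h.trans hr), ← add_assoc, ih]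

lemma seg_single (κ : ℕ) (p : ℤ) : seg κ p (p + 1) = alphaR κ (p : ZMod κ) := by
  rw [seg_succ κ le_rfl, seg_self, zero_add]

lemma cast_eq_iff_dvd (κ : ℕ) (i j : ℤ) : ((i : ZMod κ) = j) ↔ (κ : ℤ) ∣ i - j := by
  rw [← sub_eq_zero, ← Int.cast_sub, ZMod.intCast_zmod_eq_zero_iff_dvd]

/-- `⌊(j - p)/κ⌋` as a function of `j` jumps by one exactly at the integers congruent to `p`. -/
lemma floor_jump {κ : ℤ} (hκ : 0 < κ) (p j : ℤ) :
    (j - p) / κ - (j - 1 - p) / κ = if κ ∣ j - p then 1 else 0 := by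
  split_ifs with h
  · obtain ⟨c, hc⟩ := h
    have h1 : (j - p) / κ = c := by rw [hc]; exact Int.mul_ediv_cancel_left _ hκ.ne'
    have h2 : (j - 1 - p) / κ = c - 1 := by
      rw [show j - 1 - p = (κ - 1) + κ * (c - 1) by linarith, Int.add_mul_ediv_left _ _ hκ.ne',
        Int.ediv_eq_zero_of_lt (by omega) (by omega)]
      ring
    omega
  · have h3 := Int.mul_ediv_add_emod (j - p) κ
    have h4 := Int.emod_lt_of_pos (j - p) hκ
    have h5 := Int.emod_nonneg (j - p) hκ.ne'
    have h6 : (j - p) % κ ≠ 0 := fun h0 => h (Int.dvd_of_emod_eq_zero h0)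
    have h2 : (j - 1 - p) / κ = (j - p) / κ := by
      rw [show j - 1 - p = ((j - p) % κ - 1) + κ * ((j - p) / κ) by linarith,
        Int.add_mul_ediv_left _ _ hκ.ne', Int.ediv_eq_zero_of_lt (by omega) (by omega)]
      simp
    omega

lemma alphaR_fst (κ : ℕ) (q j : ℤ) :
    (alphaR κ (q : ZMod κ)).1 (j : ZMod κ) = if (κ : ℤ) ∣ j - q then 1 else 0 := by
  simp only [alphaR, Pi.single_apply, cast_eq_iff_dvd]

lemma seg_snd (κ : ℕ) (p q : ℤ) : (seg κ p q).2 = 0 := by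
  simp [seg, alphaR, Prod.snd_sum]

/-- The multiplicity of `α_j` in a segment `[p, q)` is a difference of two floor functions,
one for each endpoint. -/
lemma seg_fst {κ : ℕ} (hκ : 0 < κ) {p q : ℤ} (h : p ≤ q) (j : ℤ) :
    (seg κ p q).1 (j : ZMod κ) = (((j - p) / (κ : ℤ) - (j - q) / (κ : ℤ) : ℤ) : ℚ) := by
  induction q, h using Int.leInduction with
  | base => simp [seg_self]
  | succ q hq ih =>
    have hj := floor_jump (κ := (κ : ℤ)) (by exact_mod_cast hκ) q j
    rw [seg_succ κ hq, Prod.fst_add, Pi.add_apply, ih, alphaR_fst]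
    rw [show j - (q + 1) = j - 1 - q by ring]
    have : (if (κ : ℤ) ∣ j - q then (1 : ℚ) else 0)
        = ((if (κ : ℤ) ∣ j - q then (1 : ℤ) else 0 : ℤ) : ℚ) := by split_ifs <;> simp
    rw [this, ← hj]
    push_cast
    ring

lemma seg_mem_QPos {κ : ℕ} (hκ : 0 < κ) {p q : ℤ} (h : p ≤ q) : seg κ p q ∈ QPos κ := by
  refine ⟨seg_snd κ p q, fun i => ?_⟩
  obtain ⟨j, rfl⟩ := ZMod.intCast_surjective i
  rw [seg_fst hκ h]
  have h0 : (j - q) / (κ : ℤ) ≤ (j - p) / (κ : ℤ) := Int.ediv_le_ediv (by exact_mod_cast hκ) (by omega)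
  obtain ⟨n, hn⟩ := Int.eq_ofNat_of_zero_le (sub_nonneg.mpr h0)
  exact ⟨n, by rw [hn]; simp⟩

lemma pairSimple_eq {κ : ℕ} (hκ : 0 < κ) (ζ : Hw κ) (h0 : ζ.2 = 0) (i : ZMod κ) :
    pairSimple κ ζ i = 2 * ζ.1 i - ζ.1 (i - 1) - ζ.1 (i + 1) := by
  have : NeZero κ := ⟨hκ.ne'⟩
  rw [pairSimple, h0, finsum_eq_sum_of_fintype]
  have e1 : ∀ j : ZMod κ, (i - j = 1) = (i - 1 = j) := fun j => by
    rw [eq_iff_iff]; constructor <;> intro h <;> linear_combination h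
  have e2 : ∀ j : ZMod κ, (i - j = -1) = (i + 1 = j) := fun j => by
    rw [eq_iff_iff]; constructor <;> intro h <;> linear_combination h
  simp only [cartan, mul_add, Finset.sum_add_distrib, e1, e2, mul_ite, mul_zero,
    Finset.sum_ite_eq, Finset.mem_univ, if_true, zero_mul, ite_self]
  ring

lemma pairCo_add {κ : ℕ} (hκ : 0 < κ) (ζ β γ : Hw κ) :
    pairCo κ ζ (β + γ) = pairCo κ ζ β + pairCo κ ζ γ := by
  have : NeZero κ := ⟨hκ.ne'⟩
  simp only [pairCo, finsum_eq_sum_of_fintype, Prod.fst_add, Pi.add_apply, add_mul,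
    Finset.sum_add_distrib]

lemma pairCo_alpha {κ : ℕ} (hκ : 0 < κ) (ζ : Hw κ) (i : ZMod κ) :
    pairCo κ ζ (alphaR κ i) = pairSimple κ ζ i := by
  have : NeZero κ := ⟨hκ.ne'⟩
  simp [pairCo, finsum_eq_sum_of_fintype, alphaR, Pi.single_apply]

/-- Pairing with the coroot of a segment telescopes to boundary terms. -/
lemma pairCo_seg {κ : ℕ} (hκ : 0 < κ) (ζ : Hw κ) (h0 : ζ.2 = 0) {p q : ℤ} (h : p ≤ q) :
    pairCo κ ζ (seg κ p q) =
      (ζ.1 ((p : ℤ) : ZMod κ) - ζ.1 ((p - 1 : ℤ) : ZMod κ))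
        - (ζ.1 ((q : ℤ) : ZMod κ) - ζ.1 ((q - 1 : ℤ) : ZMod κ)) := by
  induction q, h using Int.leInduction with
  | base =>
    rw [seg_self, sub_self]
    simp [pairCo]
  | succ q hq ih =>
    rw [seg_succ κ hq, pairCo_add hκ, ih, pairCo_alpha hκ, pairSimple_eq hκ ζ h0]
    push_cast
    rw [add_sub_cancel_right]
    ring

/-- The pairing of two segments only sees coincidences of their endpoints modulo `κ`. -/
lemma pairCo_seg_seg {κ : ℕ} (hκ : 0 < κ) {p q p' q' : ℤ} (h : p ≤ q) (h' : p' ≤ q') :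
    pairCo κ (seg κ p q) (seg κ p' q') =
      (((if (κ : ℤ) ∣ p' - p then 1 else 0) - (if (κ : ℤ) ∣ p' - q then 1 else 0)
        - (if (κ : ℤ) ∣ q' - p then 1 else 0) + (if (κ : ℤ) ∣ q' - q then 1 else 0) : ℤ) : ℚ) := by
  have hκ' : (0 : ℤ) < κ := by exact_mod_cast hκ
  rw [pairCo_seg hκ _ (seg_snd κ p q) h', seg_fst hκ h, seg_fst hκ h, seg_fst hκ h, seg_fst hκ h,
    ← floor_jump hκ' p p', ← floor_jump hκ' q p', ← floor_jump hκ' p q', ← floor_jump hκ' q q']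
  push_cast
  ring

/-! ### The cylinder in coordinates -/

lemma pr_eq_iff (m l : ℕ) (a b c d : ℤ) :
    pr m l (a, b) = pr m l (c, d) ↔ ∃ k : ℤ, c = a + k * m ∧ d = b - k * l := by
  simp only [pr, QuotientAddGroup.mk'_apply]
  rw [QuotientAddGroup.eq, AddSubgroup.mem_zmultiples_iff]
  refine exists_congr fun k => ?_
  simp only [om, Prod.ext_iff, Prod.smul_fst, Prod.smul_snd, Prod.fst_add, Prod.snd_add,
    Prod.fst_neg, Prod.snd_neg, smul_eq_mul]
  constructor <;> rintro ⟨h1, h2⟩ <;> constructor <;> linarith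

lemma pr_surj (m l : ℕ) (x : Cyl m l) : ∃ a b : ℤ, x = pr m l (a, b) := by
  obtain ⟨⟨a, b⟩, h⟩ := QuotientAddGroup.mk_surjective x
  exact ⟨a, b, h.symm⟩

lemma cle_iff (m l : ℕ) (a b c d : ℤ) :
    cle m l (pr m l (a, b)) (pr m l (c, d)) ↔ ∃ k : ℤ, c + k * m ≤ a ∧ d - k * l ≤ b := by
  constructor
  · rintro ⟨⟨a', b'⟩, ⟨c', d'⟩, h1, h2, h3, h4⟩
    obtain ⟨k, rfl, rfl⟩ := (pr_eq_iff m l _ _ _ _).1 h1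
    obtain ⟨k', rfl, rfl⟩ := (pr_eq_iff m l _ _ _ _).1 h2
    dsimp only at h3 h4
    exact ⟨k - k', by linarith, by linarith⟩
  · rintro ⟨k, h1, h2⟩
    exact ⟨(a, b), (c + k * m, d - k * l), rfl, ((pr_eq_iff m l _ _ _ _).2 ⟨k, rfl, rfl⟩).symm,
      h1, h2⟩

lemma cle_of_le (m l : ℕ) {a b c d : ℤ} (h1 : c ≤ a) (h2 : d ≤ b) :
    cle m l (pr m l (a, b)) (pr m l (c, d)) :=
  (cle_iff m l a b c d).2 ⟨0, by simpa using h1, by simpa using h2⟩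

lemma con_pr (m l : ℕ) (a b : ℤ) : con m l (pr m l (a, b)) = ((b - a : ℤ) : ZMod (m + l)) := rfl

lemma alC_pr (m l : ℕ) (a b : ℤ) :
    alC m l (pr m l (a, b)) = alphaR (m + l) ((b - a : ℤ) : ZMod (m + l)) := rfl

/-! ### Boundary functions of a cylindric diagram -/

/-- `f` and `g` are the row and column boundary functions of `θ`: the cell `π(a, b)` lies in `θ`
iff `b ≤ f a`, equivalently iff `a ≤ g b`. -/
structure IsBoundary (m l : ℕ) (θ : Set (Cyl m l)) (f g : ℤ → ℤ) : Prop where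
  row : ∀ a b, pr m l (a, b) ∈ θ ↔ b ≤ f a
  col : ∀ a b, pr m l (a, b) ∈ θ ↔ a ≤ g b

lemma exists_boundary {m l : ℕ} (hm : 1 ≤ m) (hl : 1 ≤ l) {θ : Set (Cyl m l)}
    (hθ : IsCylindric m l θ) : ∃ f g : ℤ → ℤ, IsBoundary m l θ f g := by
  obtain ⟨⟨x, hx⟩, hne, hup⟩ := hθ
  obtain ⟨y, hy⟩ := (Set.ne_univ_iff_exists_notMem θ).1 hne
  obtain ⟨a₀, b₀, rfl⟩ := pr_surj m l x
  obtain ⟨a₁, b₁, rfl⟩ := pr_surj m l y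
  have hm' : (1 : ℤ) ≤ m := by exact_mod_cast hm
  have hl' : (1 : ℤ) ≤ l := by exact_mod_cast hl
  have up : ∀ a b c d : ℤ, pr m l (a, b) ∈ θ → c ≤ a → d ≤ b → pr m l (c, d) ∈ θ :=
    fun a b c d h h1 h2 => hup _ h _ (cle_of_le m l h1 h2)
  have low : ∀ k c d : ℤ, c ≤ a₀ + k * m → d ≤ b₀ - k * l → pr m l (c, d) ∈ θ :=
    fun k c d h1 h2 => up _ _ _ _
      (by rwa [← (pr_eq_iff m l a₀ b₀ _ _).2 ⟨k, rfl, rfl⟩]) h1 h2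
  have high : ∀ k c d : ℤ, a₁ + k * m ≤ c → b₁ - k * l ≤ d → pr m l (c, d) ∉ θ :=
    fun k c d h1 h2 h => hy (by
      rw [(pr_eq_iff m l a₁ b₁ _ _).2 ⟨k, rfl, rfl⟩]; exact up _ _ _ _ h h1 h2)
  have absle : ∀ (t : ℤ) (n : ℤ), 1 ≤ n → t ≤ |t| * n := fun t n hn =>
    (le_abs_self t).trans (by nlinarith [abs_nonneg t])
  have F : ∀ a : ℤ, ∃ b : ℤ, pr m l (a, b) ∈ θ ∧ ∀ z, pr m l (a, z) ∈ θ → z ≤ b := by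
    intro a
    refine Int.exists_greatest_of_bdd ⟨b₁ + |a₁ - a| * l, fun z hz => ?_⟩
      ⟨b₀ - |a - a₀| * l, low |a - a₀| _ _ (by linarith [absle (a - a₀) m hm']) le_rfl⟩
    by_contra hlt
    exact high (-|a₁ - a|) _ _ (by linarith [absle (a₁ - a) m hm']) (by linarith) hz
  have G : ∀ b : ℤ, ∃ a : ℤ, pr m l (a, b) ∈ θ ∧ ∀ z, pr m l (z, b) ∈ θ → z ≤ a := by
    intro b
    refine Int.exists_greatest_of_bdd ⟨a₁ + |b₁ - b| * m, fun z hz => ?_⟩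
      ⟨a₀ - |b - b₀| * m, low (-|b - b₀|) _ _ (by linarith) (by linarith [absle (b - b₀) l hl'])⟩
    by_contra hlt
    exact high |b₁ - b| _ _ (by linarith) (by linarith [absle (b₁ - b) l hl']) hz
  choose f hf using F
  choose g hg using G
  exact ⟨f, g, fun a b => ⟨(hf a).2 b, fun h => up _ _ _ _ (hf a).1 le_rfl h⟩,
    fun a b => ⟨(hg b).2 a, fun h => up _ _ _ _ (hg b).1 h le_rfl⟩⟩

namespace IsBoundary

variable {m l : ℕ} {θ : Set (Cyl m l)} {f g : ℤ → ℤ}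

lemma gc (H : IsBoundary m l θ f g) (a b : ℤ) : b ≤ f a ↔ a ≤ g b := by
  rw [← H.row, H.col]

lemma f_anti (H : IsBoundary m l θ f g) {a a' : ℤ} (h : a ≤ a') : f a' ≤ f a :=
  (H.gc _ _).2 (h.trans ((H.gc _ _).1 le_rfl))

lemma g_anti (H : IsBoundary m l θ f g) {b b' : ℤ} (h : b ≤ b') : g b' ≤ g b :=
  (H.gc _ _).1 (h.trans ((H.gc _ _).2 le_rfl))

lemma gc_shift (H : IsBoundary m l θ f g) (a b k : ℤ) : b - k * l ≤ f (a + k * m) ↔ b ≤ f a := by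
  rw [← H.row, ← H.row, ← (pr_eq_iff m l a b _ _).2 ⟨k, rfl, rfl⟩]

lemma f_shift (H : IsBoundary m l θ f g) (a k : ℤ) : f (a + k * m) = f a - k * l := by
  apply le_antisymm
  · have := (H.gc_shift a (f (a + k * m) + k * l) k).1 (by linarith)
    linarith
  · exact (H.gc_shift a (f a) k).2 le_rfl

lemma g_shift (H : IsBoundary m l θ f g) (b k : ℤ) : g (b - k * l) = g b + k * m := by
  apply le_antisymm
  · have h1 : b - k * l ≤ f (g (b - k * l) - k * m + k * m) := by
      rw [sub_add_cancel]; exact (H.gc _ _).2 le_rfl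
    have h2 := (H.gc _ _).1 ((H.gc_shift _ b k).1 h1)
    linarith
  · exact (H.gc _ _).1 ((H.gc_shift (g b) b k).2 ((H.gc _ _).2 le_rfl))

/-- The two sets of labels `f a - a + 1` and `b - g b` are disjoint, even modulo `κ`. -/
lemma label_not_dvd (H : IsBoundary m l θ f g) (a b : ℤ) :
    ¬ ((m + l : ℕ) : ℤ) ∣ (f a - a + 1) - (b - g b) := by
  rintro ⟨k, hk⟩
  have h1 := H.f_shift a k
  push_cast at hk
  have key : f (a + k * m) - (a + k * m) + 1 = b - g b := by rw [h1]; linarith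
  have := H.gc (a + k * m) b
  by_cases h : b ≤ f (a + k * m)
  · have := this.1 h; omega
  · have : ¬ a + k * m ≤ g b := fun h' => h (this.2 h'); omega

lemma label_not_dvd_symm (H : IsBoundary m l θ f g) (a b : ℤ) :
    ¬ ((m + l : ℕ) : ℤ) ∣ (b - g b) - (f a - a + 1) := fun h =>
  H.label_not_dvd a b (by rw [← dvd_neg, neg_sub]; exact h)

/-! ### Hooks as segments -/

lemma arm_sum (hm : 1 ≤ m) (H : IsBoundary m l θ f g) (a b : ℤ) :
    ∑ᶠ y ∈ armSet m l θ (pr m l (a, b)), alC m l y = seg (m + l) (b - a + 1) (f a - a + 1) := by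
  have hm' : (1 : ℤ) ≤ m := by exact_mod_cast hm
  have hset : armSet m l θ (pr m l (a, b)) =
      (fun j : ℤ => pr m l (a, j + a)) '' (Finset.Ico (b - a + 1) (f a - a + 1) : Finset ℤ) := by
    ext y
    simp only [armSet, Set.mem_ofPred_eq, Set.mem_image, Finset.coe_Ico, Set.mem_Ico]
    constructor
    · rintro ⟨hy, k, hk, rfl⟩
      rw [← map_add, Prod.mk_add_mk, add_zero, H.row] at hy
      refine ⟨b - a + k, by omega, ?_⟩
      rw [← map_add, Prod.mk_add_mk, add_zero]
      congr 2
      ring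
    · rintro ⟨j, hj, rfl⟩
      refine ⟨(H.row _ _).2 (by omega), (j + a - b).toNat, by omega, ?_⟩
      rw [← map_add, Prod.mk_add_mk, add_zero]
      congr 2
      omega
  rw [hset, finsum_mem_image, finsum_mem_coe_finset, seg]
  · refine Finset.sum_congr rfl fun j _ => ?_
    rw [alC_pr, add_sub_cancel_right]
  · intro j _ j' _ h
    obtain ⟨k, h1, h2⟩ := (pr_eq_iff m l _ _ _ _).1 h
    have : k = 0 := by
      have : k * m = 0 := by linarith
      rcases mul_eq_zero.1 this with h | h
      · exact h
      · omega
    subst this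
    linarith

lemma leg_sum (hl : 1 ≤ l) (H : IsBoundary m l θ f g) (a b : ℤ) :
    ∑ᶠ y ∈ legSet m l θ (pr m l (a, b)), alC m l y = seg (m + l) (b - g b) (b - a) := by
  have hl' : (1 : ℤ) ≤ l := by exact_mod_cast hl
  have hset : legSet m l θ (pr m l (a, b)) =
      (fun j : ℤ => pr m l (b - j, b)) '' (Finset.Ico (b - g b) (b - a) : Finset ℤ) := by
    ext y
    simp only [legSet, Set.mem_ofPred_eq, Set.mem_image, Finset.coe_Ico, Set.mem_Ico]
    constructor
    · rintro ⟨hy, k, hk, rfl⟩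
      rw [← map_add, Prod.mk_add_mk, add_zero, H.col] at hy
      refine ⟨b - a - k, by omega, ?_⟩
      rw [← map_add, Prod.mk_add_mk, add_zero]
      congr 2
      ring
    · rintro ⟨j, hj, rfl⟩
      refine ⟨(H.col _ _).2 (by omega), (b - j - a).toNat, by omega, ?_⟩
      rw [← map_add, Prod.mk_add_mk, add_zero]
      congr 2
      omega
  rw [hset, finsum_mem_image, finsum_mem_coe_finset, seg]
  · refine Finset.sum_congr rfl fun j _ => ?_
    rw [alC_pr, sub_sub_cancel]
  · intro j _ j' _ h
    obtain ⟨k, h1, h2⟩ := (pr_eq_iff m l _ _ _ _).1 h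
    have : k = 0 := by
      have : k * l = 0 := by linarith
      rcases mul_eq_zero.1 this with h | h
      · exact h
      · omega
    subst this
    linarith

lemma arm_eq_seg (hm : 1 ≤ m) (H : IsBoundary m l θ f g) {a b : ℤ} (h : b ≤ f a) :
    alC m l (pr m l (a, b)) + ∑ᶠ y ∈ armSet m l θ (pr m l (a, b)), alC m l y =
      seg (m + l) (b - a) (f a - a + 1) := by
  rw [H.arm_sum hm, alC_pr, ← seg_single, seg_add _ (by omega) (by omega)]

lemma leg_eq_seg (hl : 1 ≤ l) (H : IsBoundary m l θ f g) {a b : ℤ} (h : b ≤ f a) :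
    alC m l (pr m l (a, b)) + ∑ᶠ y ∈ legSet m l θ (pr m l (a, b)), alC m l y =
      seg (m + l) (b - g b) (b - a + 1) := by
  have := (H.gc _ _).1 h
  rw [H.leg_sum hl, alC_pr, ← seg_single, add_comm (seg _ _ _), seg_add _ (by omega) (by omega)]

/-- The hook of the cell `(a, b)` is the segment between its column and row labels. -/
lemma hk_eq_seg (hm : 1 ≤ m) (hl : 1 ≤ l) (H : IsBoundary m l θ f g) {a b : ℤ} (h : b ≤ f a) :
    hk m l θ (pr m l (a, b)) = seg (m + l) (b - g b) (f a - a + 1) := by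
  have := (H.gc _ _).1 h
  rw [hk, H.arm_eq_seg hm h, H.leg_sum hl, add_comm (seg _ _ _), seg_add _ (by omega) (by omega)]

/-! ### The bottom set and the roots of `Π_θ` -/

lemma mem_btm_iff (hm : 1 ≤ m) (hl : 1 ≤ l) (H : IsBoundary m l θ f g) (a b : ℤ) :
    pr m l (a, b) ∈ btm m l θ ↔ b ≤ f a ∧ f (a + 1) < b + 1 := by
  have hm' : (1 : ℤ) ≤ m := by exact_mod_cast hm
  have hl' : (1 : ℤ) ≤ l := by exact_mod_cast hl
  constructor
  · rintro ⟨i, hx, hi, hmin⟩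
    refine ⟨(H.row _ _).1 hx, ?_⟩
    by_contra hc
    have hc' := hmin _ ((H.row (a + 1) (b + 1)).2 (by omega)) (by
      rw [← hi, con_pr, con_pr]; congr 1; ring)
    obtain ⟨k, h1, h2⟩ := (cle_iff m l _ _ _ _).1 hc'
    rcases le_or_gt 0 k with hk | hk <;> nlinarith
  · rintro ⟨h1, h2⟩
    refine ⟨_, (H.row _ _).2 h1, rfl, fun y hy hc => ?_⟩
    obtain ⟨c, d, rfl⟩ := pr_surj m l y
    rw [con_pr, con_pr, cast_eq_iff_dvd] at hc
    obtain ⟨t, ht⟩ := hc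
    push_cast at ht
    -- the lift of `y` on the same diagonal of `ℤ²` as `(a, b)`
    rw [(pr_eq_iff m l c d _ _).2 ⟨t, rfl, rfl⟩] at hy ⊢
    have hy' := (H.row _ _).1 hy
    have hle : c + t * m ≤ a := by
      by_contra hlt
      have := H.f_anti (show a + 1 ≤ c + t * m by omega)
      nlinarith
    exact cle_of_le m l hle (by nlinarith)

lemma mem_btmMax_iff (hm : 1 ≤ m) (hl : 1 ≤ l) (H : IsBoundary m l θ f g) {a b : ℤ}
    (hx : pr m l (a, b) ∈ btm m l θ) :
    pr m l (a, b) ∈ btmMax m l θ ↔ b + 1 ≤ f a ∧ b ≤ f (a + 1) := by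
  have hm' : (1 : ℤ) ≤ m := by exact_mod_cast hm
  have hl' : (1 : ℤ) ≤ l := by exact_mod_cast hl
  obtain ⟨hx1, hx2⟩ := (H.mem_btm_iff hm hl a b).1 hx
  constructor
  · rintro ⟨-, hmax⟩
    constructor
    · by_contra hc
      have := H.f_anti (show a - 1 ≤ a by omega)
      have h3 := hmax (pr m l (a - 1, b)) ((H.mem_btm_iff hm hl _ _).2
        ⟨by omega, by rw [sub_add_cancel]; omega⟩) (cle_of_le m l (by omega) le_rfl)
      obtain ⟨k, h4, h5⟩ := (pr_eq_iff m l _ _ _ _).1 h3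
      rcases lt_trichotomy k 0 with hk | hk | hk
      · nlinarith
      · subst hk; omega
      · nlinarith
    · by_contra hc
      have h3 := hmax (pr m l (a, b - 1)) ((H.mem_btm_iff hm hl _ _).2
        ⟨by omega, by rw [sub_add_cancel]; omega⟩) (cle_of_le m l le_rfl (by omega))
      obtain ⟨k, h4, h5⟩ := (pr_eq_iff m l _ _ _ _).1 h3
      rcases lt_trichotomy k 0 with hk | hk | hk
      · nlinarith
      · subst hk; omega
      · nlinarith
  · rintro ⟨h1, h2⟩
    refine ⟨hx, fun y hy hle => ?_⟩
    obtain ⟨c, d, rfl⟩ := pr_surj m l y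
    obtain ⟨k, h3, h4⟩ := (cle_iff m l _ _ _ _).1 hle
    rw [(pr_eq_iff m l c d _ _).2 ⟨k, rfl, rfl⟩] at hy ⊢
    obtain ⟨h5, h6⟩ := (H.mem_btm_iff hm hl _ _).1 hy
    generalize c + k * m = c' at *
    generalize d - k * l = d' at *
    have h7 : c' = a := by
      by_contra hne
      have := H.f_anti (show c' + 1 ≤ a by omega)
      omega
    subst h7
    have h8 : d' = b := by omega
    rw [h8]

lemma not_mem_btmMin_iff (hm : 1 ≤ m) (hl : 1 ≤ l) (H : IsBoundary m l θ f g) {a b : ℤ}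
    (hx : pr m l (a, b) ∈ btm m l θ) :
    pr m l (a, b) ∉ btmMin m l θ ↔ b + 1 ≤ f a ∨ b ≤ f (a + 1) := by
  have hm' : (1 : ℤ) ≤ m := by exact_mod_cast hm
  have hl' : (1 : ℤ) ≤ l := by exact_mod_cast hl
  obtain ⟨hx1, hx2⟩ := (H.mem_btm_iff hm hl a b).1 hx
  constructor
  · intro hn
    by_contra! hc
    refine hn ⟨hx, fun y hy hle => ?_⟩
    obtain ⟨c, d, rfl⟩ := pr_surj m l y
    obtain ⟨k, h3, h4⟩ := (cle_iff m l _ _ _ _).1 hle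
    rw [(pr_eq_iff m l a b _ _).2 ⟨k, rfl, rfl⟩]
    have h1 := H.f_shift a k
    have h2 := H.f_shift (a + 1) k
    obtain ⟨h5, h6⟩ := (H.mem_btm_iff hm hl _ _).1 hy
    rw [show a + 1 + k * m = a + k * m + 1 by ring] at h2
    generalize a + k * m = a' at *
    generalize k * (l : ℤ) = kl at *
    have h7 : c = a' := by
      by_contra hne
      have := H.f_anti (show a' + 1 ≤ c by omega)
      omega
    subst h7
    have h8 : d = b - kl := by omega
    rw [h8]
  · rintro (h | h) ⟨-, hmin⟩
    · have h3 := hmin (pr m l (a, b + 1)) ((H.mem_btm_iff hm hl _ _).2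
        ⟨by omega, by omega⟩) (cle_of_le m l le_rfl (by omega))
      obtain ⟨k, h4, h5⟩ := (pr_eq_iff m l _ _ _ _).1 h3
      rcases lt_trichotomy k 0 with hk | hk | hk
      · nlinarith
      · subst hk; omega
      · nlinarith
    · have := H.f_anti (show a + 1 ≤ a + 1 + 1 by omega)
      have h3 := hmin (pr m l (a + 1, b)) ((H.mem_btm_iff hm hl _ _).2
        ⟨by omega, by omega⟩) (cle_of_le m l (by omega) le_rfl)
      obtain ⟨k, h4, h5⟩ := (pr_eq_iff m l _ _ _ _).1 h3
      rcases lt_trichotomy k 0 with hk | hk | hk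
      · nlinarith
      · subst hk; omega
      · nlinarith

/-- Every root of `Π_θ` is a gap between consecutive row labels or consecutive column labels. -/
lemma gap_of_mem_PiTheta (hm : 1 ≤ m) (hl : 1 ≤ l) (H : IsBoundary m l θ f g)
    {v : Hw (m + l)} (hv : v ∈ PiTheta m l θ) :
    (∃ a, v = seg (m + l) (f (a + 1) - (a + 1) + 1) (f a - a + 1)) ∨
      (∃ b, v = seg (m + l) (b - g b) (b + 1 - g (b + 1))) := by
  rcases hv with (⟨x, hx, hM, hn, rfl⟩ | ⟨x, hM, rfl⟩) | ⟨x, hM, rfl⟩ <;>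
    obtain ⟨a, b, rfl⟩ := pr_surj m l x
  · rw [H.mem_btmMax_iff hm hl hx] at hM
    rw [H.not_mem_btmMin_iff hm hl hx] at hn
    obtain ⟨h1, h2⟩ := (H.mem_btm_iff hm hl _ _).1 hx
    rw [alC_pr, ← seg_single]
    by_cases h : b + 1 ≤ f a
    · right
      have e1 := H.gc a b
      have e2 := H.gc (a + 1) b
      have e3 := H.gc a (b + 1)
      have e4 := H.gc (a + 1) (b + 1)
      refine ⟨b, ?_⟩
      congr 1 <;> omega
    · left
      refine ⟨a, ?_⟩
      congr 1 <;> omega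
  · obtain ⟨h1, h2⟩ := (H.mem_btm_iff hm hl _ _).1 hM.1
    have hM' := (H.mem_btmMax_iff hm hl hM.1).1 hM
    rw [H.arm_eq_seg hm h1]
    left
    refine ⟨a, ?_⟩
    congr 1; omega
  · obtain ⟨h1, h2⟩ := (H.mem_btm_iff hm hl _ _).1 hM.1
    have hM' := (H.mem_btmMax_iff hm hl hM.1).1 hM
    rw [H.leg_eq_seg hl h1]
    have e3 := H.gc a (b + 1)
    have e4 := H.gc (a + 1) (b + 1)
    right
    refine ⟨b, ?_⟩
    congr 1; omega

lemma row_gap_mem_PiTheta (hm : 1 ≤ m) (hl : 1 ≤ l) (H : IsBoundary m l θ f g) (a : ℤ) :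
    seg (m + l) (f (a + 1) - (a + 1) + 1) (f a - a + 1) ∈ PiTheta m l θ := by
  have h0 := H.f_anti (show a ≤ a + 1 by omega)
  have hx : pr m l (a, f (a + 1)) ∈ btm m l θ := (H.mem_btm_iff hm hl _ _).2 ⟨h0, by omega⟩
  by_cases h : f (a + 1) + 1 ≤ f a
  · refine Or.inl (Or.inr ⟨_, (H.mem_btmMax_iff hm hl hx).2 ⟨h, le_rfl⟩, ?_⟩)
    rw [H.arm_eq_seg hm h0]
    congr 1; omega
  · refine Or.inl (Or.inl ⟨_, hx, fun hM => h ((H.mem_btmMax_iff hm hl hx).1 hM).1,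
      (H.not_mem_btmMin_iff hm hl hx).2 (Or.inr le_rfl), ?_⟩)
    rw [alC_pr, ← seg_single]
    congr 1 <;> omega

lemma col_gap_mem_PiTheta (hm : 1 ≤ m) (hl : 1 ≤ l) (H : IsBoundary m l θ f g) (b : ℤ) :
    seg (m + l) (b - g b) (b + 1 - g (b + 1)) ∈ PiTheta m l θ := by
  have h0 := H.gc (g (b + 1)) (b + 1)
  have h1 := H.gc (g (b + 1) + 1) (b + 1)
  have h2 := H.gc (g (b + 1) + 1) b
  have h3 := H.gc (g (b + 1)) b
  have hx : pr m l (g (b + 1), b) ∈ btm m l θ :=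
    (H.mem_btm_iff hm hl _ _).2 ⟨by omega, by omega⟩
  by_cases h : b ≤ f (g (b + 1) + 1)
  · refine Or.inr ⟨_, (H.mem_btmMax_iff hm hl hx).2 ⟨by omega, h⟩, ?_⟩
    rw [H.leg_eq_seg hl (by omega)]
    congr 1; omega
  · refine Or.inl (Or.inl ⟨_, hx, fun hM => h ((H.mem_btmMax_iff hm hl hx).1 hM).2,
      (H.not_mem_btmMin_iff hm hl hx).2 (Or.inl (by omega)), ?_⟩)
    rw [alC_pr, ← seg_single]
    congr 1 <;> omega

/-! ### From the algebraic orders to the order of the diagram -/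

/-- Comparison of cells through their labels: `(a, b) ≤ (c, d)` as soon as, up to a common shift by
a multiple of `κ`, the segment of the first hook is contained in that of the second. -/
lemma cle_of_labels (H : IsBoundary m l θ f g) {a b c d s : ℤ}
    (hp : d - g d + s * (m + l : ℕ) ≤ b - g b)
    (hq : f a - a + 1 ≤ f c - c + 1 + s * (m + l : ℕ)) :
    cle m l (pr m l (a, b)) (pr m l (c, d)) := by
  have h1 := H.f_shift c (-s)
  have h2 := H.g_shift d (-s)
  refine (cle_iff m l _ _ _ _).2 ⟨-s, ?_, ?_⟩
  · by_contra hc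
    have := H.f_anti (show a ≤ c + -s * m by omega)
    push_cast at hq
    linarith
  · by_contra hc
    have := H.g_anti (show b ≤ d - -s * l by omega)
    push_cast at hp
    linarith

/-- An element of the monoid generated by `Π_θ` is, as a function on `ℤ`, a sum of two nonnegative
functions, the first jumping only at row labels and the second only at column labels. -/
lemma decomp_of_mem_closure (hm : 1 ≤ m) (hl : 1 ≤ l) (H : IsBoundary m l θ f g)
    {v : Hw (m + l)} (hv : v ∈ AddSubmonoid.closure (PiTheta m l θ)) :
    ∃ u w : ℤ → ℤ, (∀ j, 0 ≤ u j) ∧ (∀ j, 0 ≤ w j) ∧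
      (∀ j : ℤ, v.1 (j : ZMod (m + l)) = ((u j + w j : ℤ) : ℚ)) ∧
      (∀ j, (∀ a, ¬ ((m + l : ℕ) : ℤ) ∣ j - (f a - a + 1)) → u j = u (j - 1)) ∧
      (∀ j, (∀ b, ¬ ((m + l : ℕ) : ℤ) ∣ j - (b - g b)) → w j = w (j - 1)) := by
  have hκ : 0 < m + l := by omega
  have hκ' : (0 : ℤ) < (m + l : ℕ) := by exact_mod_cast hκ
  induction hv using AddSubmonoid.closure_induction with
  | zero => exact ⟨0, 0, by simp, by simp, by simp, by simp, by simp⟩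
  | add x y _ _ hx hy =>
    obtain ⟨u, w, h1, h2, h3, h4, h5⟩ := hx
    obtain ⟨u', w', h1', h2', h3', h4', h5'⟩ := hy
    refine ⟨u + u', w + w', fun j => add_nonneg (h1 j) (h1' j), fun j => add_nonneg (h2 j) (h2' j),
      fun j => ?_, fun j hj => ?_, fun j hj => ?_⟩
    · rw [Prod.fst_add, Pi.add_apply, h3, h3']
      simp only [Pi.add_apply]
      push_cast
      ring
    · simp only [Pi.add_apply, h4 j hj, h4' j hj]
    · simp only [Pi.add_apply, h5 j hj, h5' j hj]
  | mem x hx =>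
    rcases H.gap_of_mem_PiTheta hm hl hx with ⟨a, rfl⟩ | ⟨b, rfl⟩
    · have h0 := H.f_anti (show a ≤ a + 1 by omega)
      refine ⟨fun j => (j - (f (a + 1) - (a + 1) + 1)) / ((m + l : ℕ) : ℤ)
        - (j - (f a - a + 1)) / ((m + l : ℕ) : ℤ), 0,
        fun j => sub_nonneg.2 (Int.ediv_le_ediv hκ' (by omega)), by simp, fun j => ?_,
        fun j hj => ?_, by simp⟩
      · rw [seg_fst hκ (by omega)]; simp
      · have e1 := floor_jump hκ' (f (a + 1) - (a + 1) + 1) j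
        have e2 := floor_jump hκ' (f a - a + 1) j
        rw [if_neg (hj _)] at e1 e2
        dsimp only
        linarith
    · have h0 := H.g_anti (show b ≤ b + 1 by omega)
      refine ⟨0, fun j => (j - (b - g b)) / ((m + l : ℕ) : ℤ)
        - (j - (b + 1 - g (b + 1))) / ((m + l : ℕ) : ℤ), by simp,
        fun j => sub_nonneg.2 (Int.ediv_le_ediv hκ' (by omega)), fun j => ?_,
        by simp, fun j hj => ?_⟩
      · rw [seg_fst hκ (by omega)]; simp
      · have e1 := floor_jump hκ' (b - g b) j
        have e2 := floor_jump hκ' (b + 1 - g (b + 1)) j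
        rw [if_neg (hj _)] at e1 e2
        dsimp only
        linarith

lemma cle_of_trile (hm : 1 ≤ m) (hl : 1 ≤ l) (H : IsBoundary m l θ f g) {a b c d : ℤ}
    (hx : b ≤ f a) (hy : d ≤ f c)
    (h : trile m l θ (hk m l θ (pr m l (a, b))) (hk m l θ (pr m l (c, d)))) :
    cle m l (pr m l (a, b)) (pr m l (c, d)) := by
  have hκ : 0 < m + l := by omega
  have hκ' : (0 : ℤ) < (m + l : ℕ) := by exact_mod_cast hκ
  have hx' := (H.gc _ _).1 hx
  have hy' := (H.gc _ _).1 hy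
  obtain ⟨u, w, hu, hw, hv, hju, hjw⟩ := H.decomp_of_mem_closure hm hl h
  rw [H.hk_eq_seg hm hl hx, H.hk_eq_seg hm hl hy] at hv
  set q := f a - a + 1 with hq
  set p := b - g b with hp
  set q' := f c - c + 1 with hq'
  set p' := d - g d with hp'
  set K : ℤ := ((m + l : ℕ) : ℤ) with hK
  have hv' : ∀ j, (j - p') / K - (j - q') / K - ((j - p) / K - (j - q) / K) = u j + w j := by
    intro j
    have := hv j
    rw [Prod.fst_sub, Pi.sub_apply, seg_fst hκ (by omega), seg_fst hκ (by omega)] at this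
    exact_mod_cast this
  -- `D` jumps only at row labels by definition, and only at column labels by `hv'`
  set D : ℤ → ℤ := fun j => u j - ((j - q) / K - (j - q') / K) with hD
  have hstep : ∀ j, D j = D (j - 1) := by
    intro j
    have e1 := floor_jump hκ' p j
    have e2 := floor_jump hκ' q j
    have e3 := floor_jump hκ' p' j
    have e4 := floor_jump hκ' q' j
    have e5 := hv' j
    have e6 := hv' (j - 1)
    by_cases hA : ∃ a, K ∣ j - (f a - a + 1)
    · obtain ⟨a₁, ha₁⟩ := hA
      have hB : ∀ b, ¬ K ∣ j - (b - g b) := fun b₁ hb₁ =>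
        H.label_not_dvd a₁ b₁ (by have := dvd_sub hb₁ ha₁; rwa [sub_sub_sub_cancel_left] at this)
      have e7 := hjw j hB
      rw [if_neg (hB _)] at e1 e3
      simp only [hD]
      linarith
    · push Not at hA
      have e7 := hju j hA
      rw [if_neg (hA _)] at e2 e4
      simp only [hD]
      linarith
  have hconst : ∀ j, D j = D 0 := by
    intro j
    induction j using Int.induction_on with
    | zero => rfl
    | succ i ih => rw [hstep, add_sub_cancel_right, ih]
    | pred i ih => rw [← hstep, ih]
  have e1 := hconst q'
  have e2 := hconst p
  have e3 := hv' p
  have e4 := hu q'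
  have e5 := hw p
  simp only [hD] at e1 e2
  rw [sub_self, Int.zero_ediv] at e1 e3
  generalize u 0 - ((0 - q) / K - (0 - q') / K) = s at *
  refine H.cle_of_labels (s := s) ?_ ?_
  · have := (Int.le_ediv_iff_mul_le hκ').1 (show s ≤ (p - p') / K by linarith)
    linarith
  · have := (Int.le_ediv_iff_mul_le hκ').1 (show -s ≤ (q' - q) / K by linarith)
    linarith

/-- Two hooks with nonzero pairing share an endpoint modulo `κ`; nonnegativity of the difference
then compares the other endpoints. -/
lemma cle_of_hpRel (hm : 1 ≤ m) (hl : 1 ≤ l) (H : IsBoundary m l θ f g) {a b c d : ℤ}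
    (hx : b ≤ f a) (hy : d ≤ f c)
    (h : hpRel m l θ (hk m l θ (pr m l (a, b))) (hk m l θ (pr m l (c, d)))) :
    cle m l (pr m l (a, b)) (pr m l (c, d)) := by
  have hκ : 0 < m + l := by omega
  have hκ' : (0 : ℤ) < (m + l : ℕ) := by exact_mod_cast hκ
  have hx' := (H.gc _ _).1 hx
  have hy' := (H.gc _ _).1 hy
  obtain ⟨-, -, ⟨-, hpos⟩, hpair⟩ := h
  rw [H.hk_eq_seg hm hl hx, H.hk_eq_seg hm hl hy] at hpos hpair
  rw [pairCo_seg_seg hκ (by omega) (by omega), if_neg (H.label_not_dvd c b),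
    if_neg (H.label_not_dvd_symm a d)]
    at hpair
  have hpos' : ∀ j : ℤ, 0 ≤ (j - (d - g d)) / ((m + l : ℕ) : ℤ)
      - (j - (f c - c + 1)) / ((m + l : ℕ) : ℤ)
      - ((j - (b - g b)) / ((m + l : ℕ) : ℤ) - (j - (f a - a + 1)) / ((m + l : ℕ) : ℤ)) := by
    intro j
    obtain ⟨n, hn⟩ := hpos (j : ZMod (m + l))
    rw [Prod.fst_sub, Pi.sub_apply, seg_fst hκ (by omega), seg_fst hκ (by omega)] at hn
    have : (0 : ℚ) ≤ n := n.cast_nonneg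
    rw [← hn] at this
    exact_mod_cast this
  set q := f a - a + 1 with hq
  set p := b - g b with hp
  set q' := f c - c + 1 with hq'
  set p' := d - g d with hp'
  set K : ℤ := ((m + l : ℕ) : ℤ) with hK
  by_cases h1 : K ∣ p' - p
  · obtain ⟨t, ht⟩ := h1
    have e := hpos' q'
    rw [sub_self, Int.zero_ediv, show q' - p = q' - p' + K * t by linarith,
      Int.add_mul_ediv_left _ _ hκ'.ne'] at e
    have := (Int.le_ediv_iff_mul_le hκ').1 (show t ≤ (q' - q) / K by linarith)
    exact H.cle_of_labels (s := -t) (by linarith) (by linarith)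
  · by_cases h2 : K ∣ q' - q
    · obtain ⟨t, ht⟩ := h2
      have e := hpos' p
      rw [sub_self, Int.zero_ediv, show p - q = p - q' + K * t by linarith,
        Int.add_mul_ediv_left _ _ hκ'.ne'] at e
      have := (Int.le_ediv_iff_mul_le hκ').1 (show -t ≤ (p - p') / K by linarith)
      exact H.cle_of_labels (s := -t) (by linarith) (by linarith)
    · simp [h1, h2] at hpair

/-! ### From the order of the diagram to the algebraic orders -/

/-- A preorder on `h*` that contains the hooks of all adjacent pairs of cells contains the image
of the order of `θ`. -/
lemma rel_of_cle (H : IsBoundary m l θ f g) (R : Hw (m + l) → Hw (m + l) → Prop)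
    (refl : ∀ α, R α α) (trans : ∀ α β γ, R α β → R β γ → R α γ)
    (row : ∀ a b, b ≤ f (a + 1) → R (hk m l θ (pr m l (a + 1, b))) (hk m l θ (pr m l (a, b))))
    (col : ∀ a b, b + 1 ≤ f a → R (hk m l θ (pr m l (a, b + 1))) (hk m l θ (pr m l (a, b))))
    {x y : Cyl m l} (hx : x ∈ θ) (h : cle m l x y) : R (hk m l θ x) (hk m l θ y) := by
  obtain ⟨⟨a, b⟩, ⟨c, d⟩, rfl, rfl, h1, h2⟩ := h
  dsimp only at h1 h2
  rw [H.row] at hx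
  have hrow : ∀ a, c ≤ a → b ≤ f a → R (hk m l θ (pr m l (a, b))) (hk m l θ (pr m l (c, b))) := by
    intro a h
    induction a, h using Int.leInduction with
    | base => exact fun _ => refl _
    | succ a _ ih =>
      exact fun hb => trans _ _ _ (row a b hb) (ih (hb.trans (H.f_anti (by omega))))
  have hcol : ∀ b, d ≤ b → b ≤ f c → R (hk m l θ (pr m l (c, b))) (hk m l θ (pr m l (c, d))) := by
    intro b h
    induction b, h using Int.leInduction with
    | base => exact fun _ => refl _
    | succ b _ ih => exact fun hb => trans _ _ _ (col c b hb) (ih (by omega))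
  exact trans _ _ _ (hrow a h1 hx) (hcol b h2 (hx.trans (H.f_anti h1)))

lemma trile_of_cle (hm : 1 ≤ m) (hl : 1 ≤ l) (H : IsBoundary m l θ f g)
    {x y : Cyl m l} (hx : x ∈ θ) (h : cle m l x y) :
    trile m l θ (hk m l θ x) (hk m l θ y) := by
  refine H.rel_of_cle (trile m l θ) (fun α => ?_) (fun α β γ h1 h2 => ?_) (fun a b hb => ?_)
    (fun a b hb => ?_) hx h
  · rw [trile, sub_self]; exact zero_mem _
  · have := add_mem h2 h1
    rwa [sub_add_sub_cancel] at this
  · have h0 := H.f_anti (show a ≤ a + 1 by omega)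
    have h1 := (H.gc _ _).1 hb
    rw [trile, H.hk_eq_seg hm hl hb, H.hk_eq_seg hm hl (hb.trans h0),
      ← seg_add (m + l) (q := f (a + 1) - (a + 1) + 1) (by omega) (by omega), add_sub_cancel_left]
    exact AddSubmonoid.subset_closure (H.row_gap_mem_PiTheta hm hl a)
  · have h0 := H.g_anti (show b ≤ b + 1 by omega)
    have h1 := (H.gc _ _).1 hb
    rw [trile, H.hk_eq_seg hm hl hb, H.hk_eq_seg hm hl (show b ≤ f a by omega),
      ← seg_add (m + l) (q := b + 1 - g (b + 1)) (by omega) (by omega), add_sub_cancel_right]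
    exact AddSubmonoid.subset_closure (H.col_gap_mem_PiTheta hm hl b)

/-- Adjacent cells share an endpoint of their hooks, so their hooks have nonzero pairing. -/
lemma hp_of_cle (hm : 1 ≤ m) (hl : 1 ≤ l) (H : IsBoundary m l θ f g)
    {x y : Cyl m l} (hx : x ∈ θ) (h : cle m l x y) :
    Relation.ReflTransGen (hpRel m l θ) (hk m l θ x) (hk m l θ y) := by
  have hκ : 0 < m + l := by omega
  refine H.rel_of_cle (Relation.ReflTransGen (hpRel m l θ)) (fun α => .refl)
    (fun α β γ h1 h2 => h1.trans h2) (fun a b hb => .single ?_) (fun a b hb => .single ?_) hx h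
  · have h0 := H.f_anti (show a ≤ a + 1 by omega)
    have h1 := (H.gc _ _).1 hb
    refine ⟨⟨_, (H.row _ _).2 hb, rfl⟩, ⟨_, (H.row _ _).2 (hb.trans h0), rfl⟩, ?_, ?_⟩
    · rw [H.hk_eq_seg hm hl hb, H.hk_eq_seg hm hl (hb.trans h0),
        ← seg_add (m + l) (q := f (a + 1) - (a + 1) + 1) (by omega) (by omega),
        add_sub_cancel_left]
      exact seg_mem_QPos hκ (by omega)
    · rw [H.hk_eq_seg hm hl hb, H.hk_eq_seg hm hl (hb.trans h0),
        pairCo_seg_seg hκ (by omega) (by omega), if_neg (H.label_not_dvd a b),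
        if_neg (H.label_not_dvd_symm (a + 1) b), sub_self]
      split_ifs <;> simp_all
  · have h0 := H.g_anti (show b ≤ b + 1 by omega)
    have h1 := (H.gc _ _).1 hb
    have hb' : b ≤ f a := by omega
    refine ⟨⟨_, (H.row _ _).2 hb, rfl⟩, ⟨_, (H.row _ _).2 hb', rfl⟩, ?_, ?_⟩
    · rw [H.hk_eq_seg hm hl hb, H.hk_eq_seg hm hl hb',
        ← seg_add (m + l) (q := b + 1 - g (b + 1)) (by omega) (by omega), add_sub_cancel_right]
      exact seg_mem_QPos hκ (by omega)
    · rw [H.hk_eq_seg hm hl hb, H.hk_eq_seg hm hl hb',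
        pairCo_seg_seg hκ (by omega) (by omega), if_neg (H.label_not_dvd a (b + 1)),
        if_neg (H.label_not_dvd_symm a b), sub_self (f a - a + 1)]
      split_ifs <;> simp_all

/-- Hooks determine cells up to `≤` in both directions, so a chain of heap relations between
hooks lifts to a chain in `θ`, whatever cells are chosen. -/
lemma cle_of_hp (hm : 1 ≤ m) (hl : 1 ≤ l) (H : IsBoundary m l θ f g) {a b : ℤ} (hx : b ≤ f a)
    {β : Hw (m + l)}
    (h : Relation.ReflTransGen (hpRel m l θ) (hk m l θ (pr m l (a, b))) β) :
    ∀ c d, d ≤ f c → hk m l θ (pr m l (c, d)) = β → cle m l (pr m l (a, b)) (pr m l (c, d)) := by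
  induction h with
  | refl =>
    intro c d hy he
    refine H.cle_of_trile hm hl hx hy ?_
    rw [trile, he, sub_self]
    exact zero_mem _
  | tail _ hst ih =>
    intro c d hy he
    obtain ⟨z, hz, rfl⟩ := hst.1
    obtain ⟨a', b', rfl⟩ := pr_surj m l z
    rw [H.row] at hz
    subst he
    obtain ⟨k, h1, h2⟩ := (cle_iff m l _ _ _ _).1 (ih a' b' hz rfl)
    obtain ⟨k', h3, h4⟩ := (cle_iff m l _ _ _ _).1 (H.cle_of_hpRel hm hl hz hy hst)
    exact (cle_iff m l _ _ _ _).2 ⟨k + k', by linarith, by linarith⟩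

end IsBoundary

/-- Proposition 3.14: hk : (θ, ≤) → (R(w_θ), ≤^hp) is an order isomorphism;
equivalently the heap order ≤^hp and ⊴ coincide on R(w_θ). -/
theorem statement_13 (m l : ℕ) (hm : 1 ≤ m) (hl : 1 ≤ l)
    (θ : Set (Cyl m l)) (hθ : IsCylindric m l θ) :
    (∀ x ∈ θ, ∀ y ∈ θ,
      (cle m l x y ↔
        Relation.ReflTransGen (hpRel m l θ) (hk m l θ x) (hk m l θ y))) ∧
    (∀ α ∈ RwTheta m l θ, ∀ β ∈ RwTheta m l θ,
      (Relation.ReflTransGen (hpRel m l θ) α β ↔ trile m l θ α β)) := by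
  obtain ⟨f, g, H⟩ := exists_boundary hm hl hθ
  have main : ∀ x ∈ θ, ∀ y ∈ θ,
      (cle m l x y ↔ Relation.ReflTransGen (hpRel m l θ) (hk m l θ x) (hk m l θ y)) := by
    intro x hx y hy
    refine ⟨H.hp_of_cle hm hl hx, fun h => ?_⟩
    obtain ⟨a, b, rfl⟩ := pr_surj m l x
    obtain ⟨c, d, rfl⟩ := pr_surj m l y
    exact H.cle_of_hp hm hl ((H.row _ _).1 hx) h c d ((H.row _ _).1 hy) rfl
  refine ⟨main, ?_⟩
  rintro _ ⟨x, hx, rfl⟩ _ ⟨y, hy, rfl⟩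
  rw [← main x hx y hy]
  refine ⟨H.trile_of_cle hm hl hx, fun h => ?_⟩
  obtain ⟨a, b, rfl⟩ := pr_surj m l x
  obtain ⟨c, d, rfl⟩ := pr_surj m l y
  exact H.cle_of_trile hm hl ((H.row _ _).1 hx) ((H.row _ _).1 hy) h

end CylPaper
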